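/- Let α be purely imaginary and let u : ℝ → ℂ be twice continuously differentiable, satisfy the PII equation u''(x) = x·u(x) + 2·u(x)³ − α on ℝ, take purely imaginary values on ℝ, and satisfy the asymptotic expansion (A+): there exist x₀, K > 0 such that |u(x) − α/x − 2α(1−α²)·x^{−4} − 4α(1−α²)(10−3α²)·x^{−7}| ≤ K·x^{−10} for all x ≥ x₀. Define v(x) := (2/3^{1/3})·u(x/3^{1/3}). Then lim_{x→+∞} u'(x) = 0, and v'(x) = −2α·x^{−2} − 48α(1−α²)·x^{−5} + O(x^{−8}) as x → +∞. -/

import Mathlib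

/-!
An asymptotic expansion cannot be differentiated term by term in general; here the differential
equation supplies the missing control of the second derivative. Let `P` be the truncated expansion
and `w = u - P = O(x⁻¹⁰)`. The coefficients of `P` are those for which `P` solves PII up to
`O(x⁻⁹)`, and `x y + 2 y³` is Lipschitz in `y` with constant `O(x)` on bounded sets, so
`w'' = O(x⁻⁹)`. Landau's inequality on `[x, x + 1]` interpolates between `w` and `w''` and gives
`w' = O(x⁻⁹)`.
-/

/-- The real cube root of 3. -/
noncomputable def cbrt3 : ℝ := (3 : ℝ) ^ ((1:ℝ)/3)

open Asymptotics Filter Set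

section Landau

variable {E F : Type*} [NormedAddCommGroup E] [NormedSpace ℝ E] [NormedAddCommGroup F]
  {f f' f'' : ℝ → E} {g : ℝ → F} {a b A B : ℝ}

lemma norm_image_sub_sub_smul_deriv_le (hab : a ≤ b)
    (hf : ∀ t ∈ Icc a b, HasDerivWithinAt f (f' t) (Icc a b) t)
    (hf' : ∀ t ∈ Icc a b, HasDerivWithinAt f' (f'' t) (Icc a b) t)
    (hB : ∀ t ∈ Icc a b, ‖f'' t‖ ≤ B) :
    ‖f b - f a - (b - a) • f' a‖ ≤ B * (b - a) ^ 2 := by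
  have hB₀ : 0 ≤ B := (norm_nonneg _).trans (hB a (left_mem_Icc.2 hab))
  have hderiv : ∀ t ∈ Icc a b, HasDerivWithinAt (fun t ↦ f t - t • f' a) (f' t - f' a)
      (Icc a b) t := fun t ht ↦ by
    simpa using (hf t ht).fun_sub ((hasDerivWithinAt_id t _).smul_const (f' a))
  have hbound : ∀ t ∈ Ico a b, ‖f' t - f' a‖ ≤ B * (b - a) := fun t ht ↦
    (norm_image_sub_le_of_norm_deriv_le_segment' hf' (fun s hs ↦ hB s (Ico_subset_Icc_self hs))
      t (Ico_subset_Icc_self ht)).trans (by gcongr; exact ht.2.le)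
  calc ‖f b - f a - (b - a) • f' a‖ = ‖f b - b • f' a - (f a - a • f' a)‖ := by
        congr 1; module
    _ ≤ B * (b - a) * (b - a) :=
        norm_image_sub_le_of_norm_deriv_le_segment' hderiv hbound b (right_mem_Icc.2 hab)
    _ = B * (b - a) ^ 2 := by ring

/-- Landau's inequality, without the optimal constant. -/
lemma norm_deriv_le_of_norm_le_of_norm_deriv2_le (hab : a < b)
    (hf : ∀ t ∈ Icc a b, HasDerivWithinAt f (f' t) (Icc a b) t)
    (hf' : ∀ t ∈ Icc a b, HasDerivWithinAt f' (f'' t) (Icc a b) t)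
    (hA : ∀ t ∈ Icc a b, ‖f t‖ ≤ A) (hB : ∀ t ∈ Icc a b, ‖f'' t‖ ≤ B) :
    ‖f' a‖ ≤ 2 * A / (b - a) + B * (b - a) := by
  have hpos : 0 < b - a := sub_pos.2 hab
  have htaylor := norm_image_sub_sub_smul_deriv_le hab.le hf hf' hB
  have hsmul : (b - a) * ‖f' a‖ ≤ 2 * A + B * (b - a) ^ 2 := calc
    (b - a) * ‖f' a‖ = ‖f b - f a - (f b - f a - (b - a) • f' a)‖ := by
        rw [sub_sub_cancel, norm_smul, Real.norm_of_nonneg hpos.le]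
    _ ≤ ‖f b‖ + ‖f a‖ + ‖f b - f a - (b - a) • f' a‖ :=
        (norm_sub_le _ _).trans (by gcongr; exact norm_sub_le _ _)
    _ ≤ 2 * A + B * (b - a) ^ 2 := by
        linarith [hA a (left_mem_Icc.2 hab.le), hA b (right_mem_Icc.2 hab.le)]
  calc ‖f' a‖ ≤ (2 * A + B * (b - a) ^ 2) / (b - a) := by rwa [le_div_iff₀' hpos]
    _ = 2 * A / (b - a) + B * (b - a) := by field_simp

lemma isBigO_deriv_of_isBigO_of_isBigO_deriv2 (hg : AntitoneOn (fun x ↦ ‖g x‖) (Ici a))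
    (hf : ∀ᶠ x in atTop, HasDerivAt f (f' x) x) (hf' : ∀ᶠ x in atTop, HasDerivAt f' (f'' x) x)
    (hfg : f =O[atTop] g) (hfg'' : f'' =O[atTop] g) : f' =O[atTop] g := by
  obtain ⟨A, hA₀, hA⟩ := hfg.exists_nonneg
  obtain ⟨B, hB₀, hB⟩ := hfg''.exists_nonneg
  refine .of_bound (2 * A + B) ?_
  filter_upwards [eventually_ge_atTop a, eventually_forall_ge_atTop.2 hf,
    eventually_forall_ge_atTop.2 hf', eventually_forall_ge_atTop.2 hA.bound,
    eventually_forall_ge_atTop.2 hB.bound] with x hax hfx hfx' hAx hBx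
  have hgx : ∀ t ∈ Icc x (x + 1), ‖g t‖ ≤ ‖g x‖ := fun t ht ↦ hg hax (hax.trans ht.1) ht.1
  have hlandau := norm_deriv_le_of_norm_le_of_norm_deriv2_le (lt_add_one x)
    (fun t ht ↦ (hfx t ht.1).hasDerivWithinAt) (fun t ht ↦ (hfx' t ht.1).hasDerivWithinAt)
    (fun t ht ↦ (hAx t ht.1).trans (mul_le_mul_of_nonneg_left (hgx t ht) hA₀))
    (fun t ht ↦ (hBx t ht.1).trans (mul_le_mul_of_nonneg_left (hgx t ht) hB₀))
  rw [add_sub_cancel_left, div_one, mul_one] at hlandau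
  exact hlandau.trans_eq (by ring)

end Landau

section Powers

variable {E : Type*} [NormedAddCommGroup E] {f : ℝ → E} {m n : ℤ}

lemma antitoneOn_norm_zpow (hn : n ≤ 0) : AntitoneOn (fun x : ℝ ↦ ‖x ^ n‖) (Ioi 0) := by
  intro x hx y _ hxy
  obtain ⟨k, rfl⟩ := Int.exists_eq_neg_ofNat hn
  have hx₀ : 0 < x := hx
  simp only [zpow_neg, zpow_natCast, norm_inv, norm_pow, Real.norm_of_nonneg hx₀.le,
    Real.norm_of_nonneg (hx₀.le.trans hxy)]
  gcongr

lemma isBigO_zpow_zpow_atTop (hmn : m ≤ n) :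
    (fun x : ℝ ↦ x ^ m) =O[atTop] fun x ↦ x ^ n := by
  refine .of_norm_eventuallyLE ?_
  filter_upwards [eventually_ge_atTop 1] with x hx
  rw [Real.norm_of_nonneg (by positivity)]
  exact zpow_le_zpow_right₀ hx hmn

lemma isBigO_const_mul_ofReal_zpow_atTop (c : ℂ) (hmn : m ≤ n) :
    (fun x : ℝ ↦ c * (x : ℂ) ^ m) =O[atTop] fun x ↦ x ^ n := by
  refine .trans (.const_mul_left (.of_norm_left ?_) c) (isBigO_zpow_zpow_atTop hmn)
  simpa only [norm_zpow, Complex.norm_real] using (isBigO_refl (fun x : ℝ ↦ x ^ m) atTop).norm_left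

lemma isBigO_comp_div_zpow_atTop {k : ℝ} (hk : 0 < k) (hf : f =O[atTop] fun x ↦ x ^ n) :
    (fun x ↦ f (x / k)) =O[atTop] fun x ↦ x ^ n := by
  refine (hf.comp_tendsto (tendsto_id.atTop_div_const hk)).trans ?_
  simpa only [Function.comp_def, id, div_zpow, div_eq_inv_mul _ (k ^ n)] using
    (isBigO_refl (fun x : ℝ ↦ x ^ n) atTop).const_mul_left ((k ^ n)⁻¹)

lemma isBigO_zpow_atTop_iff_exists_forall_ge : (f =O[atTop] fun x : ℝ ↦ x ^ n) ↔
    ∃ x₀ : ℝ, 0 < x₀ ∧ ∃ K : ℝ, 0 < K ∧ ∀ x : ℝ, x₀ ≤ x → ‖f x‖ ≤ K * x ^ n := by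
  constructor
  · intro hf
    obtain ⟨K, hK, hbound⟩ := hf.exists_pos
    obtain ⟨x₀, hx₀⟩ := eventually_atTop.1 hbound.bound
    refine ⟨max x₀ 1, by positivity, K, hK, fun x hx ↦ ?_⟩
    have hx_pos : 0 < x := one_pos.trans_le ((le_max_right _ _).trans hx)
    simpa only [norm_zpow, Real.norm_of_nonneg hx_pos.le] using
      hx₀ x ((le_max_left _ _).trans hx)
  · rintro ⟨x₀, hx₀, K, -, hK⟩
    refine .of_bound K ?_
    filter_upwards [eventually_ge_atTop x₀] with x hx
    simpa only [norm_zpow, Real.norm_of_nonneg (hx₀.le.trans hx)] using hK x hx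

lemma hasDerivAt_ofReal_zpow (n : ℤ) {x : ℝ} (hx : x ≠ 0) :
    HasDerivAt (fun t : ℝ ↦ (t : ℂ) ^ n) (n * (x : ℂ) ^ (n - 1)) x :=
  (hasDerivAt_zpow n (x : ℂ) (.inl (Complex.ofReal_ne_zero.2 hx))).comp_ofReal

end Powers

/-- The right-hand side of the PII equation `u'' = painleveII α x u`. -/
def painleveII (α x y : ℂ) : ℂ := x * y + 2 * y ^ 3 - α

namespace painleveII

/-- The coefficient of `x⁻⁴` in the formal power solution `α x⁻¹ + …` of PII, determined by
cancelling the terms of order `x⁻³` in the equation. -/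
def coeffFour (α : ℂ) : ℂ := 2 * α * (1 - α ^ 2)

/-- The coefficient of `x⁻⁷` in the formal power solution `α x⁻¹ + …` of PII, determined by
cancelling the terms of order `x⁻⁶` in the equation. -/
def coeffSeven (α : ℂ) : ℂ := 4 * α * (1 - α ^ 2) * (10 - 3 * α ^ 2)

/-- The first three terms of the formal power solution `α x⁻¹ + …` of PII. -/
noncomputable def expansion (α : ℂ) (x : ℝ) : ℂ :=
  α * (x : ℂ) ^ (-1 : ℤ) + coeffFour α * (x : ℂ) ^ (-4 : ℤ) + coeffSeven α * (x : ℂ) ^ (-7 : ℤ)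

/-- The derivative of `expansion α` on `x ≠ 0`, in closed form. -/
noncomputable def expansionDeriv (α : ℂ) (x : ℝ) : ℂ :=
  -α * (x : ℂ) ^ (-2 : ℤ) - 4 * coeffFour α * (x : ℂ) ^ (-5 : ℤ)
    - 7 * coeffSeven α * (x : ℂ) ^ (-8 : ℤ)

/-- The second derivative of `expansion α` on `x ≠ 0`, in closed form. -/
noncomputable def expansionDeriv2 (α : ℂ) (x : ℝ) : ℂ :=
  2 * α * (x : ℂ) ^ (-3 : ℤ) + 20 * coeffFour α * (x : ℂ) ^ (-6 : ℤ)
    + 56 * coeffSeven α * (x : ℂ) ^ (-9 : ℤ)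

section Expansion

variable {α : ℂ} {x : ℝ}

lemma hasDerivAt_expansion (hx : x ≠ 0) :
    HasDerivAt (expansion α) (expansionDeriv α x) x := by
  refine ((((hasDerivAt_ofReal_zpow (-1) hx).const_mul α).add
    ((hasDerivAt_ofReal_zpow (-4) hx).const_mul (coeffFour α))).add
    ((hasDerivAt_ofReal_zpow (-7) hx).const_mul (coeffSeven α))).congr_deriv ?_
  norm_num [expansionDeriv]
  ring

lemma hasDerivAt_expansionDeriv (hx : x ≠ 0) :
    HasDerivAt (expansionDeriv α) (expansionDeriv2 α x) x := by
  refine ((((hasDerivAt_ofReal_zpow (-2) hx).const_mul (-α)).sub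
    ((hasDerivAt_ofReal_zpow (-5) hx).const_mul (4 * coeffFour α))).sub
    ((hasDerivAt_ofReal_zpow (-8) hx).const_mul (7 * coeffSeven α))).congr_deriv ?_
  norm_num [expansionDeriv2]
  ring

lemma apply_expansion_sub_expansionDeriv2 (hx : x ≠ 0) :
    painleveII α x (expansion α x) - expansionDeriv2 α x =
      (6 * α ^ 2 * coeffSeven α + 6 * α * coeffFour α ^ 2 - 56 * coeffSeven α) *
          (x : ℂ) ^ (-9 : ℤ)
        + (12 * α * coeffFour α * coeffSeven α + 2 * coeffFour α ^ 3) * (x : ℂ) ^ (-12 : ℤ)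
        + (6 * α * coeffSeven α ^ 2 + 6 * coeffFour α ^ 2 * coeffSeven α) * (x : ℂ) ^ (-15 : ℤ)
        + 6 * coeffFour α * coeffSeven α ^ 2 * (x : ℂ) ^ (-18 : ℤ)
        + 2 * coeffSeven α ^ 3 * (x : ℂ) ^ (-21 : ℤ) := by
  have hx' : (x : ℂ) ≠ 0 := Complex.ofReal_ne_zero.2 hx
  simp only [painleveII, expansion, expansionDeriv2, coeffFour, coeffSeven]
  field_simp
  ring

lemma isBigO_apply_expansion_sub_expansionDeriv2 :
    (fun x : ℝ ↦ painleveII α x (expansion α x) - expansionDeriv2 α x)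
      =O[atTop] fun x ↦ x ^ (-9 : ℤ) := by
  have hterm {m : ℤ} (hm : m ≤ -9) (c : ℂ) := isBigO_const_mul_ofReal_zpow_atTop c hm
  refine EventuallyEq.trans_isBigO ((eventually_ne_atTop 0).mono fun x hx ↦
    apply_expansion_sub_expansionDeriv2 hx) ?_
  exact ((((hterm le_rfl _).add (hterm (by norm_num) _)).add (hterm (by norm_num) _)).add
    (hterm (by norm_num) _)).add (hterm (by norm_num) _)

lemma isBigO_expansion_one : expansion α =O[atTop] fun _ ↦ (1 : ℝ) := by
  have hterm {m : ℤ} (hm : m ≤ 0) (c : ℂ) : (fun x : ℝ ↦ c * (x : ℂ) ^ m)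
      =O[atTop] fun _ ↦ (1 : ℝ) := by
    simpa only [zpow_zero] using isBigO_const_mul_ofReal_zpow_atTop c hm
  exact ((hterm (by norm_num) α).add (hterm (by norm_num) (coeffFour α))).add
    (hterm (by norm_num) (coeffSeven α))

end Expansion

section Perturbation

variable {α : ℂ} {y z : ℝ → ℂ}

lemma isBigO_apply_sub_apply (hy : y =O[atTop] fun _ ↦ (1 : ℝ)) (hz : z =O[atTop] fun _ ↦ (1 : ℝ)) :
    (fun x : ℝ ↦ painleveII α x (y x) - painleveII α x (z x))
      =O[atTop] fun x ↦ x * ‖y x - z x‖ := by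
  have hfactor : ∀ x : ℝ, (x + 2 * (y x ^ 2 + y x * z x + z x ^ 2)) * (y x - z x) =
      painleveII α x (y x) - painleveII α x (z x) := fun x ↦ by
    simp only [painleveII]; ring
  have hone : (fun _ ↦ 1 : ℝ → ℝ) =O[atTop] fun x ↦ x := by
    simpa using isBigO_zpow_zpow_atTop zero_le_one
  have hx : (fun x : ℝ ↦ (x : ℂ)) =O[atTop] fun x ↦ x := by
    simpa using isBigO_const_mul_ofReal_zpow_atTop 1 (le_refl 1)
  have hquad : (fun x ↦ 2 * (y x ^ 2 + y x * z x + z x ^ 2)) =O[atTop] fun _ ↦ (1 : ℝ) := by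
    simpa using ((((hy.pow 2).add (by simpa using hy.mul hz)).add (hz.pow 2)).const_mul_left 2)
  exact ((hx.add (hquad.trans hone)).mul (isBigO_refl _ _).norm_right).congr_left hfactor

end Perturbation

section Solution

variable {α : ℂ} {u : ℝ → ℂ}

lemma isBigO_apply_sub_expansionDeriv2
    (h : (fun x ↦ u x - expansion α x) =O[atTop] fun x ↦ x ^ (-10 : ℤ)) :
    (fun x : ℝ ↦ painleveII α x (u x) - expansionDeriv2 α x)
      =O[atTop] fun x ↦ x ^ (-9 : ℤ) := by
  have hu_bdd : u =O[atTop] fun _ ↦ (1 : ℝ) := by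
    have hsub : (fun x ↦ u x - expansion α x) =O[atTop] fun _ ↦ (1 : ℝ) := by
      simpa only [zpow_zero] using h.trans (isBigO_zpow_zpow_atTop (n := 0) (by norm_num))
    simpa only [sub_add_cancel] using hsub.add (isBigO_expansion_one (α := α))
  have hperturb : (fun x : ℝ ↦ painleveII α x (u x) - painleveII α x (expansion α x))
      =O[atTop] fun x ↦ x ^ (-9 : ℤ) := by
    refine ((isBigO_apply_sub_apply hu_bdd isBigO_expansion_one).trans
      ((isBigO_refl _ _).mul h.norm_left)).congr' .rfl ?_
    filter_upwards [eventually_ne_atTop 0] with x hx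
    rw [← zpow_one_add₀ hx]
    norm_num
  simpa only [sub_add_sub_cancel] using
    hperturb.add (isBigO_apply_expansion_sub_expansionDeriv2 (α := α))

lemma isBigO_deriv_sub_expansionDeriv
    (hu : ∀ᶠ x in atTop, DifferentiableAt ℝ u x)
    (hP : ∀ᶠ x : ℝ in atTop, HasDerivAt (deriv u) (painleveII α x (u x)) x)
    (h : (fun x ↦ u x - expansion α x) =O[atTop] fun x ↦ x ^ (-10 : ℤ)) :
    (fun x ↦ deriv u x - expansionDeriv α x) =O[atTop] fun x ↦ x ^ (-9 : ℤ) := by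
  refine isBigO_deriv_of_isBigO_of_isBigO_deriv2
    ((antitoneOn_norm_zpow (by norm_num)).mono (Ici_subset_Ioi.2 one_pos)) ?_ ?_
    (h.trans (isBigO_zpow_zpow_atTop (by norm_num))) (isBigO_apply_sub_expansionDeriv2 h)
  · filter_upwards [hu, eventually_ne_atTop 0] with x hux hx
    exact hux.hasDerivAt.sub (hasDerivAt_expansion hx)
  · filter_upwards [hP, eventually_ne_atTop 0] with x hPx hx
    exact hPx.sub (hasDerivAt_expansionDeriv hx)

lemma isBigO_sub_two_terms {f : ℝ → ℂ}
    (h : (fun x ↦ f x - expansionDeriv α x) =O[atTop] fun x ↦ x ^ (-9 : ℤ)) :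
    (fun x : ℝ ↦ f x - (-α * (x : ℂ) ^ (-2 : ℤ) + -4 * coeffFour α * (x : ℂ) ^ (-5 : ℤ)))
      =O[atTop] fun x ↦ x ^ (-8 : ℤ) :=
  ((h.trans (isBigO_zpow_zpow_atTop (by norm_num))).add
    (isBigO_const_mul_ofReal_zpow_atTop (-7 * coeffSeven α) le_rfl)).congr_left fun x ↦ by
      simp only [expansionDeriv]; ring

end Solution

end painleveII

section TwoTermExpansion

variable {u : ℝ → ℂ} {a b : ℂ} {k : ℝ}

lemma tendsto_zero_of_isBigO_sub_two_terms {f : ℝ → ℂ}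
    (h : (fun x : ℝ ↦ f x - (a * (x : ℂ) ^ (-2 : ℤ) + b * (x : ℂ) ^ (-5 : ℤ)))
      =O[atTop] fun x ↦ x ^ (-8 : ℤ)) :
    Tendsto f atTop (nhds 0) := by
  have hf : f =O[atTop] fun x ↦ x ^ (-2 : ℤ) := by
    have hterms := (isBigO_const_mul_ofReal_zpow_atTop a (le_refl (-2))).add
      (isBigO_const_mul_ofReal_zpow_atTop b (by norm_num : (-5 : ℤ) ≤ -2))
    simpa only [sub_add_cancel] using
      (h.trans (isBigO_zpow_zpow_atTop (by norm_num : (-8 : ℤ) ≤ -2))).add hterms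
  exact hf.trans_tendsto (tendsto_zpow_atTop_zero (by norm_num))

lemma deriv_const_mul_comp_div (u : ℝ → ℂ) (c : ℂ) (k x : ℝ) :
    deriv (fun t ↦ c * u (t / k)) x = c / k * deriv u (x / k) := by
  simp only [div_eq_inv_mul _ k]
  rw [deriv_const_mul_field, deriv_comp_mul_left, Complex.real_smul]
  push_cast
  ring

lemma isBigO_deriv_rescaled_sub_two_terms {n : ℤ} (c : ℝ) (hk : 0 < k)
    (h : (fun x : ℝ ↦ deriv u x - (a * (x : ℂ) ^ (-2 : ℤ) + b * (x : ℂ) ^ (-5 : ℤ)))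
      =O[atTop] fun x ↦ x ^ n) :
    (fun x : ℝ ↦ deriv (fun t ↦ ((c / k : ℝ) : ℂ) * u (t / k)) x
        - (c * a * (x : ℂ) ^ (-2 : ℤ) + c * k ^ 3 * b * (x : ℂ) ^ (-5 : ℤ)))
      =O[atTop] fun x ↦ x ^ n := by
  refine ((isBigO_comp_div_zpow_atTop hk h).const_mul_left (((c / k : ℝ) : ℂ) / k)).congr_left
    fun x ↦ ?_
  have hk' : (k : ℂ) ≠ 0 := Complex.ofReal_ne_zero.2 hk.ne'
  rw [deriv_const_mul_comp_div]
  push_cast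
  simp only [div_zpow]
  field_simp

end TwoTermExpansion

lemma cbrt3_pos : 0 < cbrt3 := Real.rpow_pos_of_pos three_pos _

lemma cbrt3_pow_three : cbrt3 ^ 3 = 3 := by
  rw [cbrt3, ← Real.rpow_mul_natCast three_pos.le]
  norm_num

theorem stmt_5_general (α : ℂ) (u : ℝ → ℂ)
    (hu : ∀ᶠ x in atTop, DifferentiableAt ℝ u x)
    (hP : ∀ᶠ x : ℝ in atTop, HasDerivAt (deriv u) ((x : ℂ) * u x + 2 * (u x) ^ 3 - α) x)
    (hAp : (fun x : ℝ ↦ u x - α / x - 2 * α * (1 - α ^ 2) * (x : ℂ) ^ (-4 : ℤ)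
        - 4 * α * (1 - α ^ 2) * (10 - 3 * α ^ 2) * (x : ℂ) ^ (-7 : ℤ))
      =O[atTop] fun x ↦ x ^ (-10 : ℤ))
    (v : ℝ → ℂ) (hv : ∀ x : ℝ, v x = ((2 / cbrt3 : ℝ) : ℂ) * u (x / cbrt3)) :
    Tendsto (deriv u) atTop (nhds 0) ∧
    (fun x : ℝ ↦ deriv v x - (-2 * α * (x : ℂ) ^ (-2 : ℤ)
        - 48 * α * (1 - α ^ 2) * (x : ℂ) ^ (-5 : ℤ)))
      =O[atTop] fun x ↦ x ^ (-8 : ℤ) := by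
  have hexp : (fun x ↦ u x - painleveII.expansion α x) =O[atTop] fun x ↦ x ^ (-10 : ℤ) :=
    hAp.congr_left fun x ↦ by
      simp only [painleveII.expansion, painleveII.coeffFour, painleveII.coeffSeven, zpow_neg_one]
      ring
  have hderiv := painleveII.isBigO_sub_two_terms
    (painleveII.isBigO_deriv_sub_expansionDeriv hu hP hexp)
  refine ⟨tendsto_zero_of_isBigO_sub_two_terms hderiv, ?_⟩
  have hcube : (cbrt3 : ℂ) ^ 3 = 3 := mod_cast cbrt3_pow_three
  rw [funext hv]
  refine (isBigO_deriv_rescaled_sub_two_terms 2 cbrt3_pos hderiv).congr_left fun x ↦ ?_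
  rw [hcube, painleveII.coeffFour, Complex.ofReal_ofNat]
  ring

/-- Under the asymptotic expansion (A+), `u'(x) → 0` as `x → +∞`, and
`v'(x) = -2α x⁻² - 48 α (1-α²) x⁻⁵ + O(x⁻⁸)` as `x → +∞`,
where `v(x) = (2/3^{1/3}) u(x/3^{1/3})`. -/
theorem stmt_5 (α : ℂ) (hα : α.re = 0) (u : ℝ → ℂ)
    (hu : ContDiff ℝ 2 u)
    (hP : ∀ x : ℝ, deriv (deriv u) x = (x : ℂ) * u x + 2 * (u x) ^ 3 - α)
    (him : ∀ x : ℝ, (u x).re = 0)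
    (hAp : ∃ x₀ : ℝ, 0 < x₀ ∧ ∃ K : ℝ, 0 < K ∧ ∀ x : ℝ, x₀ ≤ x →
      ‖u x - α / x - 2 * α * (1 - α ^ 2) * (x : ℂ) ^ (-4 : ℤ)
        - 4 * α * (1 - α ^ 2) * (10 - 3 * α ^ 2) * (x : ℂ) ^ (-7 : ℤ)‖
        ≤ K * x ^ (-10 : ℤ))
    (v : ℝ → ℂ)
    (hv : ∀ x : ℝ, v x = ((2 / cbrt3 : ℝ) : ℂ) * u (x / cbrt3)) :
    Filter.Tendsto (deriv u) Filter.atTop (nhds 0) ∧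
    ∃ x₁ : ℝ, 0 < x₁ ∧ ∃ K' : ℝ, 0 < K' ∧ ∀ x : ℝ, x₁ ≤ x →
      ‖deriv v x - (-2 * α * (x : ℂ) ^ (-2 : ℤ)
        - 48 * α * (1 - α ^ 2) * (x : ℂ) ^ (-5 : ℤ))‖ ≤ K' * x ^ (-8 : ℤ) := by
  have hP' (x : ℝ) := hP x ▸ (hu.differentiable_deriv_two x).hasDerivAt
  exact (stmt_5_general α u (.of_forall (hu.differentiable two_ne_zero)) (.of_forall hP')
    (isBigO_zpow_atTop_iff_exists_forall_ge.2 hAp) v hv).imp_right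
    isBigO_zpow_atTop_iff_exists_forall_ge.1
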